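/- arXiv:1908.01041 — 2 statements merged into one kernel-verified Lean document; each statement's English description precedes it below -/
import Mathlib

section
/- Let V ⊆ ℝ² be open and z : V → ℝ³ a smooth nonvanishing map, and consider the closed ℝ³-valued 2-form Ω = z(u¹,u²) du¹ ∧ du² on M = V × ℝ ⊆ ℝ³. Suppose that either (i) there exists a nonzero constant vector c ∈ ℝ³ with ⟨c, z(p)⟩ = 0 for all p ∈ V (the image of the projectivized map [[z]] : V → ℝP² lies in a line), or (ii) for every p ∈ V there exists w ∈ ℝ² with z(p) × (Dz(p)·w) ≠ 0 (the differential of [[z]] is nonvanishing). Then every point of M has an open neighborhood U on which there exist a smooth map a : U → SO(3) whose differential Da(q) has rank exactly 1 at every q ∈ U, and a smooth map x : U → ℝ³, such that the matrix W(q) = a(q)⁻¹ · Dx(q) is invertible at every q ∈ U and satisfies dω = Ω, namely for each i: ∂₁W_{i2} − ∂₂W_{i1} = zⁱ(u¹,u²), ∂₂W_{i3} − ∂₃W_{i2} = 0, and ∂₃W_{i1} − ∂₁W_{i3} = 0 on U. -/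
open Matrix

noncomputable section

/-- Partial derivative in the `j`-th coordinate direction. -/
def pd {m : ℕ} {F : Type*} [NormedAddCommGroup F] [NormedSpace ℝ F]
    (j : Fin m) (f : (Fin m → ℝ) → F) (u : Fin m → ℝ) : F :=
  fderiv ℝ f u (Pi.single j 1)

/-- The special orthogonal group SO(3), as a set of 3×3 real matrices. -/
def SO3 : Set (Matrix (Fin 3) (Fin 3) ℝ) :=
  {A | Aᵀ * A = 1 ∧ A.det = 1}

/-- The skew-symmetric matrix `[v]` associated to `v ∈ ℝ³`, with `[v] w = w × v`. -/
def crossMat (v : Fin 3 → ℝ) : Matrix (Fin 3) (Fin 3) ℝ :=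
  !![0, v 2, -(v 1); -(v 2), 0, v 0; v 1, -(v 0), 0]

/-- The Jacobian matrix of a map `x : ℝ³ → ℝ³`. -/
def jacobian (x : (Fin 3 → ℝ) → (Fin 3 → ℝ)) (u : Fin 3 → ℝ) :
    Matrix (Fin 3) (Fin 3) ℝ :=
  Matrix.of fun i j => pd j x u i

/-- `W(u) = a(u)⁻¹ · Dx(u)`, the coefficient matrix of the coframing `ω = a⁻¹ dx`. -/
def Wmat (a : (Fin 3 → ℝ) → Matrix (Fin 3) (Fin 3) ℝ)
    (x : (Fin 3 → ℝ) → (Fin 3 → ℝ)) (u : Fin 3 → ℝ) : Matrix (Fin 3) (Fin 3) ℝ :=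
  (a u)⁻¹ * jacobian x u

/-- The tableau `A_Q`: the span of the matrices `[x] + [y] Q`. -/
def tableau (Q : Matrix (Fin 3) (Fin 3) ℝ) : Submodule ℝ (Matrix (Fin 3) (Fin 3) ℝ) :=
  Submodule.span ℝ {M | ∃ x y : Fin 3 → ℝ, M = crossMat x + crossMat y * Q}

end


section part1
open MeasureTheory Set Topology Metric

lemma aux_primitive {F : Type*} [NormedAddCommGroup F] [NormedSpace ℝ F] [CompleteSpace F]
    (H : ℝ × ℝ → F) (O : Set (ℝ × ℝ)) (hO : IsOpen O) (c : ℝ × ℝ) (hc : c ∈ O)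
    (hH : ContDiffOn ℝ (⊤ : ℕ∞) H O) :
    ∃ (Y : ℝ × ℝ → F) (O' : Set (ℝ × ℝ)), IsOpen O' ∧ c ∈ O' ∧ ContDiff ℝ (⊤ : ℕ∞) Y ∧
      ∀ q ∈ O', fderiv ℝ Y q (0, 1) = H q := by
  obtain ⟨ε, hε, hεO⟩ := Metric.isOpen_iff.1 hO c hc
  let χ : ContDiffBump c := ⟨ε / 4, ε / 2, by positivity, by linarith⟩
  have hχO : tsupport χ ⊆ O := by
    rw [χ.tsupport_eq]
    exact (Metric.closedBall_subset_ball (by change ε / 2 < ε; linarith)).trans hεO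
  let K : ℝ × ℝ → F := fun q => χ q • H q
  have hK : ContDiff ℝ (⊤ : ℕ∞) K := by
    rw [contDiff_iff_contDiffAt]
    intro q
    by_cases hq : q ∈ tsupport χ
    · exact χ.contDiffAt.smul (hH.contDiffAt (hO.mem_nhds (hχO hq)))
    · have : K =ᶠ[𝓝 q] fun _ => 0 := by
        have h1 := (isClosed_tsupport χ).isOpen_compl.mem_nhds hq
        filter_upwards [h1] with y hy
        simp [K, image_eq_zero_of_notMem_tsupport hy]
      exact contDiffAt_const.congr_of_eventuallyEq this
  have hsupp : ∀ p x : ℝ, x ∉ closedBall c.2 (ε/2) → K (p, x) = 0 := by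
    intro p x hx
    have : χ (p, x) = 0 := by
      apply χ.zero_of_le_dist
      change ε / 2 ≤ _
      rw [mem_closedBall, not_le] at hx
      exact hx.le.trans (le_max_right _ _)
    simp [K, this]
  let f : ℝ → ℝ := indicator (Ici 0) 1
  have hf : LocallyIntegrable f volume :=
    (locallyIntegrable_const (1:ℝ)).indicator measurableSet_Ici
  let Y : ℝ × ℝ → F := fun q => convolution f (fun x => K (q.1, x)) (ContinuousLinearMap.lsmul ℝ ℝ) volume q.2
  have hY : ContDiff ℝ (⊤ : ℕ∞) Y := by
    have := contDiffOn_convolution_right_with_param (n := ⊤) (μ := (volume : Measure ℝ)) (f := f)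
      (ContinuousLinearMap.lsmul ℝ ℝ : ℝ →L[ℝ] F →L[ℝ] F) (g := fun p x => K (p, x))
      (s := univ) (k := closedBall c.2 (ε/2)) isOpen_univ (isCompact_closedBall _ _)
      (fun p x _ hx => hsupp p x hx) hf (by exact hK.contDiffOn)
    simpa [contDiffOn_univ] using this
  have hYint : ∀ p s, Y (p, s) = ∫ r in Iic s, K (p, r) := by
    intro p s
    simp only [Y, convolution]
    rw [← integral_sub_left_eq_self _ _ s, ← integral_indicator measurableSet_Iic]
    congr 1
    ext r
    by_cases hr : r ≤ s <;> simp [f, indicator, hr]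
  refine ⟨Y, ball c (ε/4), isOpen_ball, mem_ball_self (by positivity), hY, ?_⟩
  rintro ⟨p, s⟩ hq
  have hcont : Continuous fun r => K (p, r) := hK.continuous.comp (by fun_prop)
  have hInteg : Integrable fun r => K (p, r) := by
    apply hcont.integrable_of_hasCompactSupport
    exact HasCompactSupport.intro (isCompact_closedBall c.2 (ε/2)) (fun x hx => hsupp p x hx)
  have h1 : HasDerivAt (fun s => Y (p, s)) (K (p, s)) s := by
    have h2 : (fun s' => Y (p, s')) = fun s' => (∫ r in Iic s, K (p, r)) + ∫ r in s..s', K (p, r) := by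
      ext s'
      rw [← intervalIntegral.integral_Iic_sub_Iic hInteg.integrableOn hInteg.integrableOn, hYint]
      abel
    rw [h2]
    exact (intervalIntegral.integral_hasDerivAt_right (by simp) (hcont.stronglyMeasurableAtFilter _ _) hcont.continuousAt).const_add _
  have h3 : HasDerivAt (fun s => Y (p, s)) (fderiv ℝ Y (p, s) (0, 1)) s := by
    have := (hY.differentiable (by simp) (p, s)).hasFDerivAt
    have h4 : HasDerivAt (fun s : ℝ => (p, s)) (0, 1) s := (hasDerivAt_const s p).prodMk (hasDerivAt_id s)
    exact this.comp_hasDerivAt s h4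
  rw [h3.unique h1]
  simp only [K]
  rw [χ.one_of_mem_closedBall (ball_subset_closedBall hq), one_smul]

end part1
section part2
open Set Topology

lemma aux_decomp (v : Fin 2 → ℝ) :
    v = v 0 • (Pi.single 0 1 : Fin 2 → ℝ) + v 1 • (Pi.single 1 1 : Fin 2 → ℝ) := by
  ext i; fin_cases i <;> simp

lemma aux_equiv (A B : (Fin 2 → ℝ) →L[ℝ] ℝ)
    (h : A (Pi.single 0 1) * B (Pi.single 1 1) - A (Pi.single 1 1) * B (Pi.single 0 1) ≠ 0) :
    ∃ e : (Fin 2 → ℝ) ≃L[ℝ] ℝ × ℝ, (e : (Fin 2 → ℝ) →L[ℝ] ℝ × ℝ) = A.prod B := by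
  have hinj : Function.Injective (A.prod B : (Fin 2 → ℝ) →ₗ[ℝ] ℝ × ℝ) := by
    rw [← LinearMap.ker_eq_bot, LinearMap.ker_eq_bot']
    intro v hv
    have hA : A v = 0 := congrArg Prod.fst hv
    have hB : B v = 0 := congrArg Prod.snd hv
    rw [aux_decomp v] at hA hB
    simp only [map_add, map_smul, smul_eq_mul] at hA hB
    have h0 : v 0 = 0 := by
      apply (mul_eq_zero.1 (?_ : v 0 * _ = 0)).resolve_right h
      linear_combination B (Pi.single 1 1) * hA - A (Pi.single 1 1) * hB
    have h1 : v 1 = 0 := by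
      apply (mul_eq_zero.1 (?_ : v 1 * _ = 0)).resolve_right h
      linear_combination A (Pi.single 0 1) * hB - B (Pi.single 0 1) * hA
    ext i; fin_cases i <;> simp [h0, h1]
  refine ⟨(LinearEquiv.ofInjectiveOfFinrankEq _ hinj (by simp)).toContinuousLinearEquiv, ?_⟩
  ext v <;> rfl

lemma aux_transport {F : Type*} [NormedAddCommGroup F] [NormedSpace ℝ F] [CompleteSpace F]
    (N : Set (Fin 2 → ℝ)) (hN : IsOpen N) (p₀ : Fin 2 → ℝ) (hp₀ : p₀ ∈ N)
    (t : (Fin 2 → ℝ) → ℝ) (ht : ContDiffOn ℝ (⊤ : ℕ∞) t N)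
    (G : (Fin 2 → ℝ) → F) (hG : ContDiffOn ℝ (⊤ : ℕ∞) G N)
    (hdt : fderiv ℝ t p₀ ≠ 0) :
    ∃ (y : (Fin 2 → ℝ) → F) (N' : Set (Fin 2 → ℝ)), IsOpen N' ∧ p₀ ∈ N' ∧ N' ⊆ N ∧
      ContDiffOn ℝ (⊤ : ℕ∞) y N' ∧
      ∀ p ∈ N', pd 0 t p • pd 1 y p - pd 1 t p • pd 0 y p = G p := by
  set A0 := pd 0 t p₀ with hA0
  set A1 := pd 1 t p₀ with hA1
  let B : (Fin 2 → ℝ) →L[ℝ] ℝ :=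
    A0 • ContinuousLinearMap.proj 1 - A1 • ContinuousLinearMap.proj 0
  have hB0 : B (Pi.single 0 1) = - A1 := by simp [B]
  have hB1 : B (Pi.single 1 1) = A0 := by simp [B]
  let J : (Fin 2 → ℝ) → ℝ := fun p => pd 0 t p * A0 + pd 1 t p * A1
  have hpd : ∀ j, ContDiffOn ℝ (⊤ : ℕ∞) (pd j t) N := fun j =>
    (ht.fderiv_of_isOpen hN (by simp)).clm_apply contDiffOn_const
  have hJ : ContDiffOn ℝ (⊤ : ℕ∞) J N :=
    ((hpd 0).mul contDiffOn_const).add ((hpd 1).mul contDiffOn_const)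
  have hJ0 : J p₀ ≠ 0 := by
    intro h0
    have h1 : A0 * A0 + A1 * A1 = 0 := h0
    have h2 : A0 = 0 := by nlinarith [mul_self_nonneg A0, mul_self_nonneg A1]
    have h3 : A1 = 0 := by nlinarith [mul_self_nonneg A0, mul_self_nonneg A1]
    apply hdt
    ext v
    rw [aux_decomp v, map_add, map_smul, map_smul]
    change v 0 • A0 + v 1 • A1 = _
    simp [h2, h3]
  let φ : (Fin 2 → ℝ) → ℝ × ℝ := fun p => (t p, B p)
  have htd : ∀ p ∈ N, HasFDerivAt t (fderiv ℝ t p) p := fun p hp =>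
    ((ht.contDiffAt (hN.mem_nhds hp)).differentiableAt (by simp)).hasFDerivAt
  have hφd : ∀ p ∈ N, HasFDerivAt φ ((fderiv ℝ t p).prod B) p := fun p hp =>
    (htd p hp).prodMk B.hasFDerivAt
  have hφ : ContDiffOn ℝ (⊤ : ℕ∞) φ N := ht.prodMk B.contDiff.contDiffOn
  have heq : ∀ p, J p ≠ 0 → ∃ e : (Fin 2 → ℝ) ≃L[ℝ] ℝ × ℝ,
      (e : (Fin 2 → ℝ) →L[ℝ] ℝ × ℝ) = (fderiv ℝ t p).prod B := by
    intro p hp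
    apply aux_equiv
    rw [hB0, hB1]
    convert hp using 1
    simp only [J, pd]; ring
  obtain ⟨e₀, he₀⟩ := heq p₀ hJ0
  let e := (hφ.contDiffAt (hN.mem_nhds hp₀)).toOpenPartialHomeomorph φ
    (by rw [he₀]; exact hφd p₀ hp₀) (by simp)
  have hecoe : ∀ p, e p = φ p := fun p => rfl
  have hesrc : p₀ ∈ e.source := ContDiffAt.mem_toOpenPartialHomeomorph_source _ _ _
  let N1 : Set (Fin 2 → ℝ) := N ∩ J ⁻¹' {0}ᶜ
  have hN1 : IsOpen N1 := hJ.continuousOn.isOpen_inter_preimage hN isOpen_compl_singleton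
  let O := e.target ∩ e.symm ⁻¹' N1
  have hO : IsOpen O := e.isOpen_inter_preimage_symm hN1
  have hcO : φ p₀ ∈ O := by
    refine ⟨e.map_source hesrc, ?_⟩
    have : e.symm (φ p₀) = p₀ := e.left_inv hesrc
    simp only [mem_preimage, this]
    exact ⟨hp₀, hJ0⟩
  have hψ : ContDiffOn ℝ (⊤ : ℕ∞) e.symm O := by
    intro q hq
    obtain ⟨e', he'⟩ := heq (e.symm q) hq.2.2
    apply ContDiffAt.contDiffWithinAt
    apply e.contDiffAt_symm hq.1 (f₀' := e')
    · rw [he']; exact hφd _ hq.2.1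
    · exact hφ.contDiffAt (hN.mem_nhds hq.2.1)
  have hmaps : MapsTo e.symm O N1 := fun q hq => hq.2
  have hH : ContDiffOn ℝ (⊤ : ℕ∞) (fun q => (J (e.symm q))⁻¹ • G (e.symm q)) O := by
    apply ContDiffOn.smul
    · apply ContDiffOn.inv
      · exact hJ.comp hψ (fun q hq => hq.2.1)
      · intro q hq; exact hq.2.2
    · exact hG.comp hψ (fun q hq => hq.2.1)
  obtain ⟨Y, O', hO', hcO', hY, hYH⟩ := aux_primitive _ O hO (φ p₀) hcO hH
  refine ⟨fun p => Y (φ p), (e.source ∩ e ⁻¹' O') ∩ N1, (e.isOpen_inter_preimage hO').inter hN1,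
    ⟨⟨hesrc, hcO'⟩, hp₀, hJ0⟩, fun p hp => hp.2.1, ?_, ?_⟩
  · exact hY.comp_contDiffOn (hφ.mono fun p hp => hp.2.1)
  · rintro p ⟨⟨hps, hpO'⟩, hpN, hpJ⟩
    have h1 := hYH _ hpO'
    have h2 : e.symm (e p) = p := e.left_inv hps
    simp only [h2] at h1
    have h3 : ∀ v, fderiv ℝ (fun p => Y (φ p)) p v
        = (fderiv ℝ t p v) • fderiv ℝ Y (φ p) (1, 0) + (B v) • fderiv ℝ Y (φ p) (0, 1) := by
      intro v
      have h4 := ((hY.differentiable (by simp) (φ p)).hasFDerivAt.comp p (hφd p hpN)).fderiv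
      have h5 : fderiv ℝ (fun p => Y (φ p)) p = fderiv ℝ (Y ∘ φ) p := rfl
      rw [h5, h4, ← map_smul, ← map_smul, ← map_add]
      simp
    have h6 : fderiv ℝ Y (φ p) (0, 1) = (J p)⁻¹ • G p := h1
    simp only [pd, h3, h6, hB0, hB1]
    have h7 : G p = J p • (J p)⁻¹ • G p := by
      rw [smul_smul, mul_inv_cancel₀ hpJ, one_smul]
    conv_rhs => rw [h7]
    simp only [J, pd]
    module

end part2
section part3
open Set Topology

lemma aux_inv_SO3 (A : Matrix (Fin 3) (Fin 3) ℝ) (hA : A ∈ SO3) : A⁻¹ = Aᵀ :=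
  Matrix.inv_eq_left_inv hA.1

lemma aux_comp_pd (U : Set (Fin 3 → ℝ)) (hU : IsOpen U)
    (T : (Fin 3 → ℝ) → ℝ) (hT : ContDiffOn ℝ (⊤ : ℕ∞) T U) (f f' : ℝ → ℝ)
    (hf : ∀ θ, HasDerivAt f (f' θ) θ) (q : Fin 3 → ℝ) (hq : q ∈ U) :
    HasFDerivAt (fun v => f (T v)) (f' (T q) • fderiv ℝ T q) q := by
  have hTd : HasFDerivAt T (fderiv ℝ T q) q :=
    ((hT.contDiffAt (hU.mem_nhds hq)).differentiableAt (by simp)).hasFDerivAt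
  exact (hf (T q)).comp_hasFDerivAt q hTd

lemma aux_W (U : Set (Fin 3 → ℝ)) (hU : IsOpen U)
    (T : (Fin 3 → ℝ) → ℝ) (hT : ContDiffOn ℝ (⊤ : ℕ∞) T U)
    (x : (Fin 3 → ℝ) → (Fin 3 → ℝ)) (hx : ContDiffOn ℝ (⊤ : ℕ∞) x U)
    (α β : ℝ → Matrix (Fin 3) (Fin 3) ℝ)
    (hαβ : ∀ i j θ, HasDerivAt (fun θ => α θ i j) (β θ i j) θ)
    (hSO : ∀ θ, α θ ∈ SO3) (q : Fin 3 → ℝ) (hq : q ∈ U) (i j l : Fin 3) :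
    pd l (fun v => Wmat (fun q => α (T q)) x v i j) q
      - pd j (fun v => Wmat (fun q => α (T q)) x v i l) q
      = ((β (T q))ᵀ *ᵥ (pd l T q • pd j x q - pd j T q • pd l x q)) i := by
  have hW : ∀ j, (fun v => Wmat (fun q => α (T q)) x v i j)
      = fun v => ∑ k, α (T v) k i * pd j x v k := by
    intro j
    ext v
    simp only [Wmat]
    rw [aux_inv_SO3 _ (hSO _), Matrix.mul_apply]
    rfl
  have hxf : ContDiffOn ℝ (⊤ : ℕ∞) (fderiv ℝ x) U := hx.fderiv_of_isOpen hU (by simp)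
  have hxd : HasFDerivAt (fderiv ℝ x) (fderiv ℝ (fderiv ℝ x) q) q :=
    ((hxf.contDiffAt (hU.mem_nhds hq)).differentiableAt (by simp)).hasFDerivAt
  have hsymm : IsSymmSndFDerivAt ℝ x q :=
    (hx.contDiffAt (hU.mem_nhds hq)).isSymmSndFDerivAt
      (by simp only [minSmoothness_of_isRCLikeNormedField]; exact WithTop.coe_le_coe.2 (le_top : (2 : ℕ∞) ≤ ⊤))
  have hx2 : ∀ j k, HasFDerivAt (fun v => pd j x v k)
      ((ContinuousLinearMap.proj k).comp
        ((ContinuousLinearMap.apply ℝ (Fin 3 → ℝ) (Pi.single j 1 : Fin 3 → ℝ)).comp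
          (fderiv ℝ (fderiv ℝ x) q))) q := by
    intro j k
    have h1 := ((ContinuousLinearMap.apply ℝ (Fin 3 → ℝ) (Pi.single j 1 : Fin 3 → ℝ)).hasFDerivAt
      (x := fderiv ℝ x q)).comp q hxd
    exact ((ContinuousLinearMap.proj (R := ℝ) (φ := fun _ : Fin 3 => ℝ) k).hasFDerivAt).comp q h1
  have hpd : ∀ l j, pd l (fun v => Wmat (fun q => α (T q)) x v i j) q
      = ∑ k, (α (T q) k i * fderiv ℝ (fderiv ℝ x) q (Pi.single l 1) (Pi.single j 1) k
          + pd j x q k * (β (T q) k i * pd l T q)) := by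
    intro l j
    have h2 := HasFDerivAt.fun_sum (u := Finset.univ) (fun k _ =>
      (aux_comp_pd U hU T hT _ _ (hαβ k i) q hq).fun_mul (hx2 j k))
    rw [hW j]
    change fderiv ℝ _ q _ = _
    rw [HasFDerivAt.fderiv h2]
    simp [pd]
  rw [hpd, hpd]
  rw [← Finset.sum_sub_distrib]
  simp only [Matrix.mulVec, dotProduct, Matrix.transpose_apply, Pi.sub_apply, Pi.smul_apply,
    smul_eq_mul]
  apply Finset.sum_congr rfl
  intro k _
  rw [hsymm (Pi.single l 1) (Pi.single j 1)]
  ring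

lemma aux_rank (U : Set (Fin 3 → ℝ)) (hU : IsOpen U)
    (T : (Fin 3 → ℝ) → ℝ) (hT : ContDiffOn ℝ (⊤ : ℕ∞) T U)
    (α β : ℝ → Matrix (Fin 3) (Fin 3) ℝ)
    (hαβ : ∀ i j θ, HasDerivAt (fun θ => α θ i j) (β θ i j) θ)
    (q : Fin 3 → ℝ) (hq : q ∈ U) (hβ : β (T q) ≠ 0) (j₀ : Fin 3) (hj₀ : pd j₀ T q ≠ 0) :
    (Matrix.of fun (ik : Fin 3 × Fin 3) (j : Fin 3) =>
              pd j (fun v => α (T v) ik.1 ik.2) q).rank = 1 := by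
  have h1 : (Matrix.of fun (ik : Fin 3 × Fin 3) (j : Fin 3) =>
      pd j (fun v => α (T v) ik.1 ik.2) q)
      = Matrix.vecMulVec (fun ik : Fin 3 × Fin 3 => β (T q) ik.1 ik.2) (fun j => pd j T q) := by
    ext ik j
    simp only [Matrix.of_apply, Matrix.vecMulVec_apply]
    unfold pd
    rw [(aux_comp_pd U hU T hT _ _ (hαβ ik.1 ik.2) q hq).fderiv]
    simp
  rw [h1]
  apply le_antisymm (Matrix.rank_vecMulVec_le _ _)
  rw [Nat.one_le_iff_ne_zero]
  intro h0
  rw [Matrix.rank, Submodule.finrank_eq_zero, LinearMap.range_eq_bot] at h0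
  apply hβ
  ext i k
  have := congrFun (LinearMap.congr_fun h0 (Pi.single j₀ 1)) (i, k)
  simp [Matrix.vecMulVec_apply] at this
  rw [Matrix.zero_apply]
  rw [← mul_eq_zero] at this
  exact (mul_eq_zero.1 this).resolve_right hj₀

lemma aux_det (y0 y1 n m : Fin 3 → ℝ) (t0 t1 : ℝ)
    (h : crossProduct (t0 • y1 - t1 • y0) n ≠ 0) :
    ∃ k : Fin 3 → ℝ, (Matrix.of fun i j : Fin 3 =>
      (![y0 + t0 • (m + k), y1 + t1 • (m + k), n] j) i).det ≠ 0 := by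
  set w := crossProduct (t0 • y1 - t1 • y0) n with hw
  have hww : w ⬝ᵥ w ≠ 0 := fun h0 => h (dotProduct_self_eq_zero.1 h0)
  refine ⟨((1 - y0 ⬝ᵥ crossProduct y1 n) / (w ⬝ᵥ w)) • w - m, ?_⟩
  have hτ : (1 - y0 ⬝ᵥ crossProduct y1 n) / (w ⬝ᵥ w) * (w ⬝ᵥ w)
      = 1 - y0 ⬝ᵥ crossProduct y1 n := div_mul_cancel₀ _ hww
  set τ := (1 - y0 ⬝ᵥ crossProduct y1 n) / (w ⬝ᵥ w)
  suffices h1 : (Matrix.of fun i j : Fin 3 =>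
      (![y0 + t0 • (m + (τ • w - m)), y1 + t1 • (m + (τ • w - m)), n] j) i).det = 1 by
    rw [h1]; exact one_ne_zero
  have h2 : (Matrix.of fun i j : Fin 3 =>
      (![y0 + t0 • (m + (τ • w - m)), y1 + t1 • (m + (τ • w - m)), n] j) i).det
      = y0 ⬝ᵥ crossProduct y1 n + τ * (w ⬝ᵥ crossProduct (t0 • y1 - t1 • y0) n) := by
    rw [Matrix.det_fin_three]
    simp [Matrix.of_apply, crossProduct, dotProduct, Fin.sum_univ_three]
    ring
  rw [h2, ← hw, hτ]
  ring

end part3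
section part4
open Set Topology

lemma aux_cross (B : Matrix (Fin 3) (Fin 3) ℝ) (n G z : Fin 3 → ℝ) (hn : n ≠ 0) (hz : z ≠ 0)
    (hBn : Bᵀ *ᵥ n = 0) (hBG : Bᵀ *ᵥ G = z) : crossProduct G n ≠ 0 := by
  intro h
  obtain ⟨i, hi⟩ := Function.ne_iff.1 hn
  have e0 := congrFun h 0
  have e1 := congrFun h 1
  have e2 := congrFun h 2
  simp [crossProduct] at e0 e1 e2
  have h1 : n i • G = G i • n := by
    ext j
    fin_cases i <;> fin_cases j <;> simp <;> linarith
  have h2 : n i • z = 0 := by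
    rw [← hBG, ← Matrix.mulVec_smul, h1, Matrix.mulVec_smul, hBn, smul_zero]
  exact hz ((smul_eq_zero.1 h2).resolve_left hi)

/-- The projection onto the first two coordinates. -/
noncomputable def auxProj : (Fin 3 → ℝ) →L[ℝ] (Fin 2 → ℝ) :=
  ContinuousLinearMap.pi fun i => ContinuousLinearMap.proj i.castSucc

lemma auxProj_apply (q : Fin 3 → ℝ) : auxProj q = fun i : Fin 2 => q i.castSucc := rfl

lemma auxProj_0 : auxProj (Pi.single 0 1) = Pi.single 0 1 := by
  ext i; fin_cases i <;> simp [auxProj_apply]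

lemma auxProj_1 : auxProj (Pi.single 1 1) = Pi.single 1 1 := by
  ext i; fin_cases i <;> simp [auxProj_apply]

lemma auxProj_2 : auxProj (Pi.single 2 1) = 0 := by
  ext i; fin_cases i <;> simp [auxProj_apply]

lemma aux_core
    (V : Set (Fin 2 → ℝ))
    (z : (Fin 2 → ℝ) → (Fin 3 → ℝ)) (hz : ContDiffOn ℝ (⊤ : ℕ∞) z V)
    (hz0 : ∀ p ∈ V, z p ≠ 0)
    (q₀ : Fin 3 → ℝ) (N : Set (Fin 2 → ℝ)) (hN : IsOpen N) (hNV : N ⊆ V)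
    (hq₀ : auxProj q₀ ∈ N)
    (t : (Fin 2 → ℝ) → ℝ) (ht : ContDiffOn ℝ (⊤ : ℕ∞) t N)
    (hdt : fderiv ℝ t (auxProj q₀) ≠ 0)
    (α β : ℝ → Matrix (Fin 3) (Fin 3) ℝ)
    (hαβ : ∀ i j θ, HasDerivAt (fun θ => α θ i j) (β θ i j) θ)
    (hα : ∀ i j, ContDiff ℝ (⊤ : ℕ∞) (fun θ => α θ i j))
    (hβ : ∀ i j, ContDiff ℝ (⊤ : ℕ∞) (fun θ => β θ i j))
    (hSO : ∀ θ, α θ ∈ SO3)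
    (n : ℝ → (Fin 3 → ℝ)) (hn : ContDiff ℝ (⊤ : ℕ∞) n) (hn0 : ∀ θ, n θ ≠ 0)
    (hβn : ∀ θ, (β θ)ᵀ *ᵥ n θ = 0) (κ : ℝ) (hκ : κ ≠ 0)
    (hβz : ∀ p ∈ N, (β (t p))ᵀ *ᵥ (β (t p) *ᵥ z p) = κ • z p) :
      ∃ U : Set (Fin 3 → ℝ), IsOpen U ∧ q₀ ∈ U ∧
        (∀ q ∈ U, (fun i : Fin 2 => q i.castSucc) ∈ V) ∧
        ∃ (a : (Fin 3 → ℝ) → Matrix (Fin 3) (Fin 3) ℝ)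
          (x : (Fin 3 → ℝ) → (Fin 3 → ℝ)),
          (∀ i k : Fin 3, ContDiffOn ℝ (⊤ : ℕ∞) (fun q => a q i k) U) ∧
          (∀ q ∈ U, a q ∈ SO3) ∧
          (∀ q ∈ U, (Matrix.of fun (ik : Fin 3 × Fin 3) (j : Fin 3) =>
              pd j (fun v => a v ik.1 ik.2) q).rank = 1) ∧
          ContDiffOn ℝ (⊤ : ℕ∞) x U ∧
          (∀ q ∈ U, IsUnit (Wmat a x q).det) ∧
          (∀ q ∈ U, ∀ i : Fin 3,
            pd 0 (fun v => Wmat a x v i 1) q - pd 1 (fun v => Wmat a x v i 0) q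
                = z (fun i' : Fin 2 => q i'.castSucc) i ∧
            pd 1 (fun v => Wmat a x v i 2) q - pd 2 (fun v => Wmat a x v i 1) q = 0 ∧
            pd 2 (fun v => Wmat a x v i 0) q - pd 0 (fun v => Wmat a x v i 2) q
                = 0) := by
  let G : (Fin 2 → ℝ) → (Fin 3 → ℝ) := fun p => κ⁻¹ • (β (t p) *ᵥ z p)
  have hGz : ∀ p ∈ N, (β (t p))ᵀ *ᵥ G p = z p := by
    intro p hp
    simp only [G]
    rw [Matrix.mulVec_smul, hβz p hp, smul_smul, inv_mul_cancel₀ hκ, one_smul]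
  have hG : ContDiffOn ℝ (⊤ : ℕ∞) G N := by
    rw [contDiffOn_pi]
    intro i
    simp only [G, Pi.smul_apply, Matrix.mulVec, dotProduct]
    apply ContDiffOn.const_smul
    apply ContDiffOn.sum
    intro j _
    exact ((hβ i j).comp_contDiffOn ht).mul (contDiffOn_pi.1 (hz.mono hNV) j)
  obtain ⟨y, N', hN', hp₀', hN'N, hy, hyG⟩ := aux_transport N hN (auxProj q₀) hq₀ t ht G hG hdt
  have hcr : crossProduct (G (auxProj q₀)) (n (t (auxProj q₀))) ≠ 0 :=
    aux_cross (β (t (auxProj q₀))) _ _ _ (hn0 _) (hz0 _ (hNV hq₀)) (hβn _) (hGz _ hq₀)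
  rw [← hyG _ hp₀'] at hcr
  obtain ⟨k, hk⟩ := aux_det _ _ _ (q₀ 2 • deriv n (t (auxProj q₀))) _ _ hcr
  let T : (Fin 3 → ℝ) → ℝ := fun q => t (auxProj q)
  let x : (Fin 3 → ℝ) → (Fin 3 → ℝ) := fun q => y (auxProj q) + q 2 • n (T q) + T q • k
  have htf : ContDiffOn ℝ (⊤ : ℕ∞) (fderiv ℝ t) N := ht.fderiv_of_isOpen hN (by simp)
  let N2 := N ∩ fderiv ℝ t ⁻¹' {0}ᶜ
  have hN2 : IsOpen N2 := htf.continuousOn.isOpen_inter_preimage hN isOpen_compl_singleton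
  let U1 : Set (Fin 3 → ℝ) := auxProj ⁻¹' (N' ∩ N2)
  have hU1 : IsOpen U1 := (hN'.inter hN2).preimage auxProj.continuous
  have hT : ContDiffOn ℝ (⊤ : ℕ∞) T U1 :=
    ht.comp auxProj.contDiff.contDiffOn (fun q hq => hq.2.1)
  have hYs : ContDiffOn ℝ (⊤ : ℕ∞) (fun q => y (auxProj q)) U1 :=
    hy.comp auxProj.contDiff.contDiffOn (fun q hq => hq.1)
  have hx : ContDiffOn ℝ (⊤ : ℕ∞) x U1 := by
    have h2c : ContDiffOn ℝ (⊤ : ℕ∞) (fun q : Fin 3 → ℝ => q 2) U1 :=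
      (contDiff_apply ℝ ℝ (2 : Fin 3)).contDiffOn
    exact (hYs.add (h2c.smul (hn.comp_contDiffOn hT))).add (hT.smul contDiffOn_const)
  have htd : ∀ q ∈ U1, HasFDerivAt T ((fderiv ℝ t (auxProj q)).comp auxProj) q := by
    intro q hq
    exact ((ht.contDiffAt (hN.mem_nhds hq.2.1)).differentiableAt
      (by simp)).hasFDerivAt.comp q auxProj.hasFDerivAt
  have hTv : ∀ q ∈ U1, ∀ v, fderiv ℝ T q v = fderiv ℝ t (auxProj q) (auxProj v) := by
    intro q hq v
    rw [(htd q hq).fderiv]; rfl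
  have hxv : ∀ q ∈ U1, ∀ v, fderiv ℝ x q v = fderiv ℝ y (auxProj q) (auxProj v)
      + v 2 • n (T q)
      + fderiv ℝ t (auxProj q) (auxProj v) • (q 2 • deriv n (T q) + k) := by
    intro q hq v
    have hyd : HasFDerivAt (fun q => y (auxProj q)) ((fderiv ℝ y (auxProj q)).comp auxProj) q :=
      ((hy.contDiffAt (hN'.mem_nhds hq.1)).differentiableAt
        (by simp)).hasFDerivAt.comp q auxProj.hasFDerivAt
    have hnd : HasFDerivAt (fun q => n (T q)) _ q :=
      ((hn.differentiable (by simp) (T q)).hasDerivAt.hasFDerivAt).comp q (htd q hq)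
    have h2d : HasFDerivAt (fun q : Fin 3 → ℝ => q 2)
        (ContinuousLinearMap.proj (R := ℝ) (φ := fun _ : Fin 3 => ℝ) 2) q :=
      (ContinuousLinearMap.proj (R := ℝ) (φ := fun _ : Fin 3 => ℝ) 2).hasFDerivAt
    have hxd : HasFDerivAt x _ q := (hyd.add (h2d.smul hnd)).add ((htd q hq).smul_const k)
    rw [hxd.fderiv]
    simp
    module
  have hT0 : ∀ q ∈ U1, pd 0 T q = pd 0 t (auxProj q) := fun q hq => by
    simp only [pd]; rw [hTv q hq, auxProj_0]
  have hT1 : ∀ q ∈ U1, pd 1 T q = pd 1 t (auxProj q) := fun q hq => by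
    simp only [pd]; rw [hTv q hq, auxProj_1]
  have hT2 : ∀ q ∈ U1, pd 2 T q = 0 := fun q hq => by
    simp only [pd]; rw [hTv q hq, auxProj_2, map_zero]
  have hx0 : ∀ q ∈ U1, pd 0 x q = pd 0 y (auxProj q)
      + pd 0 t (auxProj q) • (q 2 • deriv n (T q) + k) := fun q hq => by
    simp only [pd]; rw [hxv q hq, auxProj_0]; simp
  have hx1 : ∀ q ∈ U1, pd 1 x q = pd 1 y (auxProj q)
      + pd 1 t (auxProj q) • (q 2 • deriv n (T q) + k) := fun q hq => by
    simp only [pd]; rw [hxv q hq, auxProj_1]; simp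
  have hx2 : ∀ q ∈ U1, pd 2 x q = n (T q) := fun q hq => by
    simp only [pd]; rw [hxv q hq, auxProj_2]; simp
  have hjc : ContinuousOn (fun q => (jacobian x q).det) U1 := by
    have hxf : ContDiffOn ℝ (⊤ : ℕ∞) (fderiv ℝ x) U1 := hx.fderiv_of_isOpen hU1 (by simp)
    have hxe : ∀ i j, ContinuousOn (fun q => pd j x q i) U1 := fun i j =>
      continuousOn_pi.1 (hxf.continuousOn.clm_apply continuousOn_const) i
    simp only [Matrix.det_fin_three, jacobian, Matrix.of_apply]
    fun_prop (disch := assumption)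
  let U := U1 ∩ (fun q => (jacobian x q).det) ⁻¹' {0}ᶜ
  have hU : IsOpen U := hjc.isOpen_inter_preimage hU1 isOpen_compl_singleton
  have hUU1 : U ⊆ U1 := inter_subset_left
  have hq₀U1 : q₀ ∈ U1 := ⟨hp₀', hq₀, hdt⟩
  refine ⟨U, hU, ⟨hq₀U1, ?_⟩, fun q hq => hNV hq.1.2.1, fun q => α (T q), x, ?_, ?_, ?_,
    hx.mono hUU1, ?_, ?_⟩
  · have : jacobian x q₀ = (Matrix.of fun i j : Fin 3 =>
      (![pd 0 y (auxProj q₀) + pd 0 t (auxProj q₀) • (q₀ 2 • deriv n (t (auxProj q₀)) + k),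
        pd 1 y (auxProj q₀) + pd 1 t (auxProj q₀) • (q₀ 2 • deriv n (t (auxProj q₀)) + k),
        n (t (auxProj q₀))] j) i) := by
      ext i j
      simp only [jacobian, Matrix.of_apply]
      fin_cases j
      · exact congrFun (hx0 q₀ hq₀U1) i
      · exact congrFun (hx1 q₀ hq₀U1) i
      · exact congrFun (hx2 q₀ hq₀U1) i
    simp only [mem_preimage, this]
    exact hk
  · intro i k
    exact (hα i k).comp_contDiffOn (hT.mono hUU1)
  · intro q _; exact hSO _
  · intro q hq
    have hβ0 : β (T q) ≠ 0 := by
      intro h0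
      have := hGz _ hq.1.2.1
      apply hz0 _ (hNV hq.1.2.1)
      rw [← this]
      have h0' : β (t (auxProj q)) = 0 := h0
      rw [h0']; simp
    have hj : ∃ j, pd j T q ≠ 0 := by
      by_contra hcon
      push Not at hcon
      apply hq.1.2.2
      have h0 : pd 0 t (auxProj q) = 0 := by rw [← hT0 q hq.1, hcon]
      have h1 : pd 1 t (auxProj q) = 0 := by rw [← hT1 q hq.1, hcon]
      simp only [pd] at h0 h1
      ext v
      rw [aux_decomp v, map_add, map_smul, map_smul, h0, h1]
      simp
    obtain ⟨j₀, hj₀⟩ := hj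
    exact aux_rank U hU T (hT.mono hUU1) α β hαβ q hq hβ0 j₀ hj₀
  · intro q hq
    simp only [Wmat]
    rw [aux_inv_SO3 _ (hSO _), Matrix.det_mul, Matrix.det_transpose, (hSO _).2, one_mul]
    exact isUnit_iff_ne_zero.2 hq.2
  · intro q hq i
    have hWl := aux_W U hU T (hT.mono hUU1) x (hx.mono hUU1) α β hαβ hSO q hq i
    refine ⟨?_, ?_, ?_⟩
    · rw [hWl, hT0 q hq.1, hT1 q hq.1, hx0 q hq.1, hx1 q hq.1]
      have h3 : ∀ (a b : ℝ) (u v m : Fin 3 → ℝ), a • (v + b • m) - b • (u + a • m)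
          = a • v - b • u := by intros; module
      rw [h3, hyG _ hq.1.1]
      exact congrFun (hGz _ hq.1.2.1) i
    · rw [hWl, hT2 q hq.1, hx2 q hq.1, zero_smul, sub_zero, Matrix.mulVec_smul, hβn]
      simp
    · rw [hWl, hT2 q hq.1, hx2 q hq.1, zero_smul, zero_sub, Matrix.mulVec_neg,
        Matrix.mulVec_smul, hβn]
      simp

end part4
section part5
open Set Topology

lemma aux_SO3_mul {A B : Matrix (Fin 3) (Fin 3) ℝ} (hA : A ∈ SO3) (hB : B ∈ SO3) :
    A * B ∈ SO3 := by
  refine ⟨?_, ?_⟩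
  · rw [Matrix.transpose_mul, Matrix.mul_assoc, ← Matrix.mul_assoc Aᵀ, hA.1, Matrix.one_mul, hB.1]
  · rw [Matrix.det_mul, hA.2, hB.2, one_mul]

/-- The infinitesimal rotation about the first coordinate axis. -/
noncomputable def auxE : Matrix (Fin 3) (Fin 3) ℝ := !![0, 0, 0; 0, 0, -1; 0, 1, 0]

lemma auxE_sq (w : Fin 3 → ℝ) (hw : w 0 = 0) : auxEᵀ *ᵥ (auxE *ᵥ w) = w := by
  ext i
  fin_cases i <;> simp [auxE, Matrix.mulVec, dotProduct, Fin.sum_univ_three, hw]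

lemma auxE_e : auxEᵀ *ᵥ (Pi.single 0 1 : Fin 3 → ℝ) = 0 := by
  ext i
  fin_cases i <;> simp [auxE]

/-- Matrix-valued trigonometric function. -/
noncomputable def auxTrig (w : ℝ) (L M K : Matrix (Fin 3) (Fin 3) ℝ) (θ : ℝ) :
    Matrix (Fin 3) (Fin 3) ℝ :=
  Real.cos (w * θ) • L + Real.sin (w * θ) • M + K

lemma auxTrig_mul (w : ℝ) (L M K R : Matrix (Fin 3) (Fin 3) ℝ) (θ : ℝ) :
    auxTrig w L M K θ * R = auxTrig w (L * R) (M * R) (K * R) θ := by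
  simp [auxTrig, Matrix.add_mul]

lemma auxTrig_contDiff (w : ℝ) (L M K : Matrix (Fin 3) (Fin 3) ℝ) (i j : Fin 3) :
    ContDiff ℝ (⊤ : ℕ∞) (fun θ => auxTrig w L M K θ i j) := by
  simp only [auxTrig, Matrix.add_apply, Matrix.smul_apply, smul_eq_mul]
  fun_prop

lemma auxTrig_hasDerivAt (w : ℝ) (L M K : Matrix (Fin 3) (Fin 3) ℝ) (i j : Fin 3) (θ : ℝ) :
    HasDerivAt (fun θ => auxTrig w L M K θ i j) (auxTrig w (w • M) (-(w • L)) 0 θ i j) θ := by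
  simp only [auxTrig, Matrix.add_apply, Matrix.smul_apply, smul_eq_mul]
  have h1 : HasDerivAt (fun θ : ℝ => w * θ) w θ := by
    simpa using (hasDerivAt_id θ).const_mul w
  have h2 := ((h1.cos.mul_const (L i j)).add (h1.sin.mul_const (M i j))).add_const (K i j)
  refine h2.congr_deriv ?_
  simp
  ring

lemma aux_core2
    (V : Set (Fin 2 → ℝ))
    (z : (Fin 2 → ℝ) → (Fin 3 → ℝ)) (hz : ContDiffOn ℝ (⊤ : ℕ∞) z V)
    (hz0 : ∀ p ∈ V, z p ≠ 0)
    (q₀ : Fin 3 → ℝ) (N : Set (Fin 2 → ℝ)) (hN : IsOpen N) (hNV : N ⊆ V)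
    (hq₀ : auxProj q₀ ∈ N)
    (t : (Fin 2 → ℝ) → ℝ) (ht : ContDiffOn ℝ (⊤ : ℕ∞) t N)
    (hdt : fderiv ℝ t (auxProj q₀) ≠ 0)
    (A A' B B' : ℝ → Matrix (Fin 3) (Fin 3) ℝ)
    (hAd : ∀ i j θ, HasDerivAt (fun θ => A θ i j) (A' θ i j) θ)
    (hBd : ∀ i j θ, HasDerivAt (fun θ => B θ i j) (B' θ i j) θ)
    (hA : ∀ i j, ContDiff ℝ (⊤ : ℕ∞) (fun θ => A θ i j))
    (hB : ∀ i j, ContDiff ℝ (⊤ : ℕ∞) (fun θ => B θ i j))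
    (hASO : ∀ θ, A θ ∈ SO3) (hBSO : ∀ θ, B θ ∈ SO3) (c : ℝ) (hc : c ≠ 0)
    (hAB : ∀ θ, A' θ * B θ + A θ * B' θ = c • (A θ * auxE * B θ))
    (hBz : ∀ p ∈ N, (B (t p) *ᵥ z p) 0 = 0) :
      ∃ U : Set (Fin 3 → ℝ), IsOpen U ∧ q₀ ∈ U ∧
        (∀ q ∈ U, (fun i : Fin 2 => q i.castSucc) ∈ V) ∧
        ∃ (a : (Fin 3 → ℝ) → Matrix (Fin 3) (Fin 3) ℝ)
          (x : (Fin 3 → ℝ) → (Fin 3 → ℝ)),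
          (∀ i k : Fin 3, ContDiffOn ℝ (⊤ : ℕ∞) (fun q => a q i k) U) ∧
          (∀ q ∈ U, a q ∈ SO3) ∧
          (∀ q ∈ U, (Matrix.of fun (ik : Fin 3 × Fin 3) (j : Fin 3) =>
              pd j (fun v => a v ik.1 ik.2) q).rank = 1) ∧
          ContDiffOn ℝ (⊤ : ℕ∞) x U ∧
          (∀ q ∈ U, IsUnit (Wmat a x q).det) ∧
          (∀ q ∈ U, ∀ i : Fin 3,
            pd 0 (fun v => Wmat a x v i 1) q - pd 1 (fun v => Wmat a x v i 0) q
                = z (fun i' : Fin 2 => q i'.castSucc) i ∧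
            pd 1 (fun v => Wmat a x v i 2) q - pd 2 (fun v => Wmat a x v i 1) q = 0 ∧
            pd 2 (fun v => Wmat a x v i 0) q - pd 0 (fun v => Wmat a x v i 2) q
                = 0) := by
  have hAA : ∀ θ (w : Fin 3 → ℝ), (A θ)ᵀ *ᵥ (A θ *ᵥ w) = w := fun θ w => by
    rw [Matrix.mulVec_mulVec, (hASO θ).1, Matrix.one_mulVec]
  have hBB : ∀ θ (w : Fin 3 → ℝ), (B θ)ᵀ *ᵥ (B θ *ᵥ w) = w := fun θ w => by
    rw [Matrix.mulVec_mulVec, (hBSO θ).1, Matrix.one_mulVec]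
  have hβt : ∀ θ (w : Fin 3 → ℝ), (c • (A θ * auxE * B θ))ᵀ *ᵥ w
      = c • ((B θ)ᵀ *ᵥ (auxEᵀ *ᵥ ((A θ)ᵀ *ᵥ w))) := by
    intro θ w
    simp only [Matrix.transpose_smul, Matrix.transpose_mul, Matrix.smul_mulVec,
      Matrix.mulVec_mulVec, Matrix.mul_assoc]
  refine aux_core V z hz hz0 q₀ N hN hNV hq₀ t ht hdt (fun θ => A θ * B θ)
    (fun θ => c • (A θ * auxE * B θ)) ?_ ?_ ?_ (fun θ => aux_SO3_mul (hASO θ) (hBSO θ))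
    (fun θ => A θ *ᵥ Pi.single 0 1) ?_ ?_ ?_ (c * c) (mul_ne_zero hc hc) ?_
  · intro i j θ
    simp only [← hAB, Matrix.mul_apply, Matrix.add_apply, ← Finset.sum_add_distrib]
    exact HasDerivAt.fun_sum fun k _ => (hAd i k θ).fun_mul (hBd k j θ)
  · intro i j
    simp only [Matrix.mul_apply]
    fun_prop
  · intro i j
    simp only [Matrix.mul_apply, Matrix.smul_apply]
    fun_prop
  · rw [contDiff_pi]
    intro i
    simp only [Matrix.mulVec, dotProduct]
    fun_prop
  · intro θ h0
    have h1 := hAA θ (Pi.single 0 1)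
    rw [h0, Matrix.mulVec_zero] at h1
    have := congrFun h1 0
    simp at this
  · intro θ
    rw [hβt, hAA, auxE_e, Matrix.mulVec_zero, smul_zero]
  · intro p hp
    rw [hβt, Matrix.smul_mulVec, ← Matrix.mulVec_mulVec, ← Matrix.mulVec_mulVec,
      Matrix.mulVec_smul, hAA, Matrix.mulVec_smul, auxE_sq _ (hBz p hp), Matrix.mulVec_smul,
      hBB, smul_smul]

lemma aux_frame (c d : Fin 3 → ℝ) (hc : c ≠ 0) (hd : d ≠ 0) (hcd : c ⬝ᵥ d = 0) :
    ∃ (R : Matrix (Fin 3) (Fin 3) ℝ) (γ δ : ℝ), R ∈ SO3 ∧ γ ≠ 0 ∧ δ ≠ 0 ∧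
      (∀ w, (R *ᵥ w) 0 = γ * (c ⬝ᵥ w)) ∧ (∀ w, (R *ᵥ w) 1 = δ * (d ⬝ᵥ w)) := by
  have hpos : ∀ v : Fin 3 → ℝ, v ≠ 0 → ∃ g : ℝ, g ≠ 0 ∧ g * g * (v ⬝ᵥ v) = 1 := by
    intro v hv
    have h0 : 0 < v ⬝ᵥ v := by
      have h1 : v ⬝ᵥ v ≠ 0 := fun h => hv (dotProduct_self_eq_zero.1 h)
      have h2 : 0 ≤ v ⬝ᵥ v := by
        simp only [dotProduct]
        exact Finset.sum_nonneg fun i _ => mul_self_nonneg _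
      exact lt_of_le_of_ne h2 h1.symm
    refine ⟨(Real.sqrt (v ⬝ᵥ v))⁻¹, inv_ne_zero (Real.sqrt_pos.2 h0).ne', ?_⟩
    rw [← mul_inv, Real.mul_self_sqrt h0.le, inv_mul_cancel₀ h0.ne']
  obtain ⟨γ, hγ, hγc⟩ := hpos c hc
  obtain ⟨δ, hδ, hδd⟩ := hpos d hd
  obtain ⟨e, he⟩ : ∃ e, e = γ • c := ⟨_, rfl⟩
  obtain ⟨f, hf⟩ : ∃ f, f = δ • d := ⟨_, rfl⟩
  have hee : e ⬝ᵥ e = 1 := by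
    rw [he, smul_dotProduct, dotProduct_smul, smul_eq_mul, smul_eq_mul, ← mul_assoc, hγc]
  have hff : f ⬝ᵥ f = 1 := by
    rw [hf, smul_dotProduct, dotProduct_smul, smul_eq_mul, smul_eq_mul, ← mul_assoc, hδd]
  have hef : e ⬝ᵥ f = 0 := by
    rw [he, hf, smul_dotProduct, dotProduct_smul, hcd]; simp
  refine ⟨Matrix.of ![e, f, crossProduct e f], γ, δ, ?_, hγ, hδ, ?_, ?_⟩
  · simp only [dotProduct, Fin.sum_univ_three] at hee hff hef
    refine ⟨?_, ?_⟩
    · rw [mul_eq_one_comm]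
      ext i j
      fin_cases i <;> fin_cases j <;>
        simp [Matrix.mul_apply, Fin.sum_univ_three, crossProduct] 
      · linear_combination hee
      · linear_combination hef
      · ring
      · linear_combination hef
      · linear_combination hff
      · ring
      · ring
      · ring
      · linear_combination (f 0 * f 0 + f 1 * f 1 + f 2 * f 2) * hee + hff -
          (e 0 * f 0 + e 1 * f 1 + e 2 * f 2) * hef
    · rw [Matrix.det_fin_three]
      simp [crossProduct]
      linear_combination (f 0 * f 0 + f 1 * f 1 + f 2 * f 2) * hee + hff -
          (e 0 * f 0 + e 1 * f 1 + e 2 * f 2) * hef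
  · intro w
    change e ⬝ᵥ w = _
    rw [he, smul_dotProduct, smul_eq_mul]
  · intro w
    change f ⬝ᵥ w = _
    rw [hf, smul_dotProduct, smul_eq_mul]

end part5
section part6
open Set Topology

lemma aux_A1_SO3 (θ : ℝ) :
    auxTrig 1 !![0, 0, 0; 0, 1, 0; 0, 0, 1] auxE !![1, 0, 0; 0, 0, 0; 0, 0, 0] θ ∈ SO3 := by
  have h := Real.sin_sq_add_cos_sq θ
  refine ⟨?_, ?_⟩
  · ext i j
    fin_cases i <;> fin_cases j <;>
      simp [auxTrig, auxE, Matrix.mul_apply, Fin.sum_univ_three] <;>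
      first | done | linear_combination h | ring
  · rw [Matrix.det_fin_three]
    simp [auxTrig, auxE]
    linear_combination h

lemma aux_A5_SO3 (θ : ℝ) :
    auxTrig 5 !![9/25, 0, -12/25; 0, 1, 0; -12/25, 0, 16/25] !![0, -3/5, 0; 3/5, 0, -4/5; 0, 4/5, 0]
      !![16/25, 0, 12/25; 0, 0, 0; 12/25, 0, 9/25] θ ∈ SO3 := by
  have h := Real.sin_sq_add_cos_sq (5 * θ)
  refine ⟨?_, ?_⟩
  · ext i j
    fin_cases i <;> fin_cases j <;>
      simp [auxTrig, Matrix.mul_apply, Fin.sum_univ_three]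
    · linear_combination (9/25) * h
    · ring
    · linear_combination (-12/25) * h
    · ring
    · linear_combination h
    · ring
    · linear_combination (-12/25) * h
    · ring
    · linear_combination (16/25) * h
  · rw [Matrix.det_fin_three]
    simp [auxTrig]
    linear_combination h

lemma aux_B3_SO3 (θ : ℝ) :
    auxTrig 3 !![1, 0, 0; 0, 1, 0; 0, 0, 0] !![0, 1, 0; -1, 0, 0; 0, 0, 0]
      !![0, 0, 0; 0, 0, 0; 0, 0, 1] θ ∈ SO3 := by
  have h := Real.sin_sq_add_cos_sq (3 * θ)
  refine ⟨?_, ?_⟩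
  · ext i j
    fin_cases i <;> fin_cases j <;>
      simp [auxTrig, Matrix.mul_apply, Fin.sum_univ_three] <;>
      first | done | linear_combination h | ring
  · rw [Matrix.det_fin_three]
    simp [auxTrig]
    linear_combination h

end part6

/-- Theorem 4.9 of the paper. For `Ω = z(u¹,u²) du¹ ∧ du²` with `z`
nonvanishing, if the projectivization `[[z]]` has image in a line or has nonvanishing
differential, then locally there exist `a : U → SO(3)` of rank 1 and `x : U → ℝ³`
such that `ω = a⁻¹ dx` is a coframing with `dω = Ω`. -/
theorem rank_one_local_solvability
    (V : Set (Fin 2 → ℝ)) (hV : IsOpen V)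
    (z : (Fin 2 → ℝ) → (Fin 3 → ℝ)) (hz : ContDiffOn ℝ (⊤ : ℕ∞) z V)
    (hz0 : ∀ p ∈ V, z p ≠ 0)
    (hcase :
      (∃ c : Fin 3 → ℝ, c ≠ 0 ∧ ∀ p ∈ V, c ⬝ᵥ z p = 0) ∨
      (∀ p ∈ V, ∃ w : Fin 2 → ℝ, crossProduct (z p) (fderiv ℝ z p w) ≠ 0)) :
    ∀ q₀ : Fin 3 → ℝ, (fun i : Fin 2 => q₀ i.castSucc) ∈ V →
      ∃ U : Set (Fin 3 → ℝ), IsOpen U ∧ q₀ ∈ U ∧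
        (∀ q ∈ U, (fun i : Fin 2 => q i.castSucc) ∈ V) ∧
        ∃ (a : (Fin 3 → ℝ) → Matrix (Fin 3) (Fin 3) ℝ)
          (x : (Fin 3 → ℝ) → (Fin 3 → ℝ)),
          (∀ i k : Fin 3, ContDiffOn ℝ (⊤ : ℕ∞) (fun q => a q i k) U) ∧
          (∀ q ∈ U, a q ∈ SO3) ∧
          (∀ q ∈ U, (Matrix.of fun (ik : Fin 3 × Fin 3) (j : Fin 3) =>
              pd j (fun v => a v ik.1 ik.2) q).rank = 1) ∧
          ContDiffOn ℝ (⊤ : ℕ∞) x U ∧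
          (∀ q ∈ U, IsUnit (Wmat a x q).det) ∧
          (∀ q ∈ U, ∀ i : Fin 3,
            pd 0 (fun v => Wmat a x v i 1) q - pd 1 (fun v => Wmat a x v i 0) q
                = z (fun i' : Fin 2 => q i'.castSucc) i ∧
            pd 1 (fun v => Wmat a x v i 2) q - pd 2 (fun v => Wmat a x v i 1) q = 0 ∧
            pd 2 (fun v => Wmat a x v i 0) q - pd 0 (fun v => Wmat a x v i 2) q
                = 0) := by
  intro q₀ hq₀
  change auxProj q₀ ∈ V at hq₀
  rcases hcase with ⟨c, hc0, hc⟩ | hcase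
  · obtain ⟨R, γ, δ, hR, hγ, hδ, hR0, -⟩ :=
      aux_frame c (z (auxProj q₀)) hc0 (hz0 _ hq₀) (hc _ hq₀)
    refine aux_core2 V z hz hz0 q₀ V hV subset_rfl hq₀ (fun p => p 0)
      (contDiff_apply ℝ ℝ (0 : Fin 2)).contDiffOn ?_ _ _ (fun _ => R) (fun _ => 0)
      (auxTrig_hasDerivAt 1 !![0, 0, 0; 0, 1, 0; 0, 0, 1] auxE !![1, 0, 0; 0, 0, 0; 0, 0, 0])
      (fun i j θ => hasDerivAt_const _ _) (auxTrig_contDiff _ _ _ _) (fun i j => contDiff_const)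
      aux_A1_SO3 (fun _ => hR) 1 one_ne_zero ?_ ?_
    · have h1 : HasFDerivAt (fun p : Fin 2 → ℝ => p 0)
        (ContinuousLinearMap.proj (R := ℝ) (φ := fun _ : Fin 2 => ℝ) 0) (auxProj q₀) :=
        (ContinuousLinearMap.proj (R := ℝ) (φ := fun _ : Fin 2 => ℝ) 0).hasFDerivAt
      rw [h1.fderiv]
      intro h0
      have := DFunLike.congr_fun h0 (Pi.single 0 1)
      simp at this
    · intro θ
      simp only [Matrix.mul_zero, add_zero, one_smul]
      refine congrArg (· * R) ?_
      ext i j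
      fin_cases i <;> fin_cases j <;>
        simp [auxTrig, auxE, Matrix.mul_apply, Fin.sum_univ_three]
    · intro p hp
      rw [hR0, hc p hp, mul_zero]
  · set p₀ := auxProj q₀ with hp₀
    obtain ⟨w, hw⟩ := hcase p₀ hq₀
    set ζ := z p₀ with hζ
    set η := fderiv ℝ z p₀ w with hη
    obtain ⟨c, hc⟩ : ∃ c, c = (ζ ⬝ᵥ ζ) • η - (ζ ⬝ᵥ η) • ζ := ⟨_, rfl⟩
    have hcz : c ⬝ᵥ ζ = 0 := by
      rw [hc]; simp [dotProduct, Fin.sum_univ_three]; ring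
    have hcη : c ⬝ᵥ η ≠ 0 := by
      have h1 : c ⬝ᵥ η = crossProduct ζ η ⬝ᵥ crossProduct ζ η := by
        rw [hc]; simp [dotProduct, Fin.sum_univ_three, crossProduct]; ring
      rw [h1]
      exact fun h0 => hw (dotProduct_self_eq_zero.1 h0)
    have hc0 : c ≠ 0 := by rintro rfl; simp at hcη
    obtain ⟨R, γ, δ, hR, hγ, hδ, hR0, hR1⟩ := aux_frame c ζ hc0 (hz0 _ hq₀) hcz
    have hlin : ∀ e : Fin 3 → ℝ, ContDiffOn ℝ (⊤ : ℕ∞) (fun p => e ⬝ᵥ z p) V := by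
      intro e
      simp only [dotProduct]
      exact ContDiffOn.sum fun i _ => contDiffOn_const.mul (contDiffOn_pi.1 hz i)
    have hlind : ∀ e : Fin 3 → ℝ, ∃ D : (Fin 2 → ℝ) →L[ℝ] ℝ,
        HasFDerivAt (fun p => e ⬝ᵥ z p) D p₀ ∧ D w = e ⬝ᵥ η := by
      intro e
      have hzd : HasFDerivAt z (fderiv ℝ z p₀) p₀ :=
        ((hz.contDiffAt (hV.mem_nhds hq₀)).differentiableAt (by simp)).hasFDerivAt
      refine ⟨_, HasFDerivAt.fun_sum fun i _ => ((hasFDerivAt_pi'.1 hzd) i).const_mul (e i), ?_⟩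
      simp [dotProduct, hη]
    let u : (Fin 2 → ℝ) → ℝ := fun p => γ * (c ⬝ᵥ z p)
    let s : (Fin 2 → ℝ) → ℝ := fun p => δ * (ζ ⬝ᵥ z p)
    have hu : ContDiffOn ℝ (⊤ : ℕ∞) u V := contDiffOn_const.mul (hlin c)
    have hs : ContDiffOn ℝ (⊤ : ℕ∞) s V := contDiffOn_const.mul (hlin ζ)
    have hs0 : s p₀ ≠ 0 :=
      mul_ne_zero hδ (fun h0 => hz0 _ hq₀ (dotProduct_self_eq_zero.1 h0))
    have hu0 : u p₀ = 0 := by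
      change γ * (c ⬝ᵥ ζ) = 0
      rw [hcz, mul_zero]
    let N := V ∩ s ⁻¹' {0}ᶜ
    have hN : IsOpen N := hs.continuousOn.isOpen_inter_preimage hV isOpen_compl_singleton
    have hNV : N ⊆ V := Set.inter_subset_left
    let t : (Fin 2 → ℝ) → ℝ := fun p => (-1 / 3) * Real.arctan (u p / s p)
    have ht : ContDiffOn ℝ (⊤ : ℕ∞) t N :=
      contDiffOn_const.mul
        (((hu.mono hNV).div (hs.mono hNV) (fun p hp => hp.2)).arctan)
    have hdt : fderiv ℝ t p₀ ≠ 0 := by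
      obtain ⟨D, hD, hDw⟩ := hlind c
      obtain ⟨D', hD', -⟩ := hlind ζ
      have htt : t = fun p => (-1 / 3) * Real.arctan ((γ * (c ⬝ᵥ z p)) * (δ * (ζ ⬝ᵥ z p))⁻¹) := by
        funext p; simp only [t, u, s, div_eq_mul_inv]
      have hinv : HasFDerivAt (fun p => (δ * (ζ ⬝ᵥ z p))⁻¹) (-(s p₀ ^ 2)⁻¹ • δ • D') p₀ :=
        (hasDerivAt_inv hs0).comp_hasFDerivAt p₀ (hD'.const_mul δ)
      have h1 := (((hD.const_mul γ).fun_mul hinv).arctan).const_mul (-1 / 3)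
      rw [htt]
      change fderiv ℝ (fun p => (-1 / 3) *
        Real.arctan ((γ * (c ⬝ᵥ z p)) * (δ * (ζ ⬝ᵥ z p))⁻¹)) p₀ ≠ 0
      rw [HasFDerivAt.fderiv h1]
      intro h0
      have h2 := DFunLike.congr_fun h0 w
      have hcz' : c ⬝ᵥ z p₀ = 0 := hcz
      have hs0' : δ * (ζ ⬝ᵥ z p₀) ≠ 0 := hs0
      simp [hDw, hcz', hγ, hcη] at h2
      simp_all
    have hB := fun (L M K : Matrix (Fin 3) (Fin 3) ℝ) => auxTrig_mul 3 L M K R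
    refine aux_core2 V z hz hz0 q₀ N hN hNV ⟨hq₀, hs0⟩ t ht hdt _ _ _ _
      (auxTrig_hasDerivAt 5 !![9/25, 0, -12/25; 0, 1, 0; -12/25, 0, 16/25]
        !![0, -3/5, 0; 3/5, 0, -4/5; 0, 4/5, 0] !![16/25, 0, 12/25; 0, 0, 0; 12/25, 0, 9/25])
      (auxTrig_hasDerivAt 3 (!![1, 0, 0; 0, 1, 0; 0, 0, 0] * R)
        (!![0, 1, 0; -1, 0, 0; 0, 0, 0] * R) (!![0, 0, 0; 0, 0, 0; 0, 0, 1] * R))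
      (auxTrig_contDiff _ _ _ _) (auxTrig_contDiff _ _ _ _)
      aux_A5_SO3 ?_ 4 (by norm_num) ?_ ?_
    · intro θ
      rw [← auxTrig_mul]
      exact aux_SO3_mul (aux_B3_SO3 θ) hR
    · intro θ
      have h3 : auxTrig 3 ((3 : ℝ) • ((!![0, 1, 0; -1, 0, 0; 0, 0, 0] : Matrix _ _ ℝ) * R))
          (-((3 : ℝ) • ((!![1, 0, 0; 0, 1, 0; 0, 0, 0] : Matrix _ _ ℝ) * R))) 0 θ
          = auxTrig 3 ((3 : ℝ) • (!![0, 1, 0; -1, 0, 0; 0, 0, 0] : Matrix _ _ ℝ))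
          (-((3 : ℝ) • (!![1, 0, 0; 0, 1, 0; 0, 0, 0] : Matrix _ _ ℝ))) 0 θ * R := by
        rw [auxTrig_mul, Matrix.neg_mul, Matrix.smul_mul, Matrix.smul_mul, Matrix.zero_mul]
      rw [h3, ← auxTrig_mul, ← Matrix.mul_assoc, ← Matrix.mul_assoc, ← Matrix.mul_assoc,
        ← Matrix.add_mul, ← Matrix.smul_mul]
      congr 1
      ext i j
      fin_cases i <;> fin_cases j <;>
        simp [auxTrig, auxE, Matrix.mul_apply, Fin.sum_univ_three] <;> ring
    · intro p hp
      rw [← auxTrig_mul, ← Matrix.mulVec_mulVec]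
      have h4 : ∀ v : Fin 3 → ℝ, ((auxTrig 3 !![1, 0, 0; 0, 1, 0; 0, 0, 0]
          !![0, 1, 0; -1, 0, 0; 0, 0, 0] !![0, 0, 0; 0, 0, 0; 0, 0, 1] (t p)) *ᵥ v) 0
          = Real.cos (3 * t p) * v 0 + Real.sin (3 * t p) * v 1 := by
        intro v
        simp [auxTrig, Matrix.mulVec, dotProduct, Fin.sum_univ_three]
      have h5 : 3 * t p = - Real.arctan (u p / s p) := by simp only [t]; ring
      have hsp : s p ≠ 0 := hp.2
      rw [h4, h5, hR0, hR1, Real.cos_neg, Real.sin_neg]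
      change Real.cos (Real.arctan (u p / s p)) * u p
        + -Real.sin (Real.arctan (u p / s p)) * s p = 0
      have h6 : Real.sin (Real.arctan (u p / s p))
          = (u p / s p) * Real.cos (Real.arctan (u p / s p)) := by
        have := Real.tan_arctan (u p / s p)
        rw [Real.tan_eq_sin_div_cos, div_eq_iff (Real.cos_arctan_pos _).ne'] at this
        exact this
      rw [h6]
      field_simp
      ring
end

section
/- Let V ⊆ ℝ² be an open convex set, g : ℝ → ℝ³ a smooth map, and h₁, h₂ : V → ℝ³ smooth maps satisfying ∂₂ h₁(u) − ∂₁ h₂(u) = [g(u¹)] h₂(u) for all u = (u¹,u²) ∈ V. Then there exists a smooth map k : V → ℝ³ such that h₁ = ∂₁ k + [g(u¹)] k and h₂ = ∂₂ k on V. -/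
open Matrix

open scoped ContDiff

/-- Picard iterates for a linear ODE. -/
noncomputable def odeIter {F : Type*} [NormedAddCommGroup F] [NormedSpace ℝ F]
    (L : ℝ → F →L[ℝ] F) (x₀ : F) : ℕ → ℝ → F
  | 0 => fun _ => x₀
  | n + 1 => fun t => ∫ s in (0 : ℝ)..t, L s (odeIter L x₀ n s)

theorem odeIter_continuous {F : Type*} [NormedAddCommGroup F] [NormedSpace ℝ F] [CompleteSpace F]
    (L : ℝ → F →L[ℝ] F) (hL : Continuous L) (x₀ : F) (n : ℕ) :
    Continuous (odeIter L x₀ n) := by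
  induction n with
  | zero => exact continuous_const
  | succ n ih =>
    exact intervalIntegral.continuous_primitive
      (fun a b => (hL.clm_apply ih).intervalIntegrable a b) 0

theorem odeIter_hasDerivAt {F : Type*} [NormedAddCommGroup F] [NormedSpace ℝ F] [CompleteSpace F]
    (L : ℝ → F →L[ℝ] F) (hL : Continuous L) (x₀ : F) (n : ℕ) (t : ℝ) :
    HasDerivAt (odeIter L x₀ (n + 1)) (L t (odeIter L x₀ n t)) t :=
  (hL.clm_apply (odeIter_continuous L hL x₀ n)).integral_hasStrictDerivAt 0 t |>.hasDerivAt

theorem odeIter_bound {F : Type*} [NormedAddCommGroup F] [NormedSpace ℝ F] [CompleteSpace F]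
    (L : ℝ → F →L[ℝ] F) (x₀ : F) (T M : ℝ) (hM0 : 0 ≤ M)
    (hM : ∀ t, |t| ≤ T → ‖L t‖ ≤ M) (n : ℕ) :
    ∀ t, |t| ≤ T → ‖odeIter L x₀ n t‖ ≤ ‖x₀‖ * (M ^ n / n.factorial) * |t| ^ n := by
  induction n with
  | zero => intro t _; simp [odeIter]
  | succ n ih =>
    intro t ht
    have h1 : ∀ s ∈ Set.uIoc 0 t, |s| ≤ T := by
      intro s hs
      refine le_trans ?_ ht
      have := Set.abs_sub_left_of_mem_uIcc (Set.uIoc_subset_uIcc hs)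
      simpa using this
    simp only [odeIter]
    calc ‖∫ s in (0 : ℝ)..t, L s (odeIter L x₀ n s)‖
        = ‖∫ s in Set.uIoc 0 t, L s (odeIter L x₀ n s)‖ :=
          intervalIntegral.norm_intervalIntegral_eq _ _ _ _
      _ ≤ ∫ s in Set.uIoc 0 t, M * (‖x₀‖ * (M ^ n / n.factorial)) * |s - 0| ^ n := by
          apply MeasureTheory.norm_integral_le_of_norm_le
          · apply intervalIntegrable_iff.1
            apply Continuous.intervalIntegrable
            fun_prop
          · refine (MeasureTheory.ae_restrict_iff' measurableSet_uIoc).2 (.of_forall ?_)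
            intro s hs
            calc ‖L s (odeIter L x₀ n s)‖ ≤ ‖L s‖ * ‖odeIter L x₀ n s‖ :=
                  ContinuousLinearMap.le_opNorm _ _
              _ ≤ M * (‖x₀‖ * (M ^ n / n.factorial) * |s| ^ n) := by
                  gcongr
                  · exact hM s (h1 s hs)
                  · exact ih s (h1 s hs)
              _ = _ := by rw [sub_zero]; ring
      _ = _ := by
          rw [MeasureTheory.integral_const_mul, integral_pow_abs_sub_uIoc, Nat.factorial_succ]
          push_cast
          rw [sub_zero]
          field_simp
          ring

theorem linear_ode {F : Type*} [NormedAddCommGroup F] [NormedSpace ℝ F] [CompleteSpace F]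
    (L : ℝ → F →L[ℝ] F) (hL : Continuous L) (x₀ : F) :
    ∃ x : ℝ → F, x 0 = x₀ ∧ ∀ t, HasDerivAt x (L t (x t)) t := by
  refine ⟨fun t => x₀ + ∑' n, odeIter L x₀ (n + 1) t, by simp [odeIter], fun t => ?_⟩
  obtain ⟨M, hM⟩ := (isCompact_Icc (a := -(|t| + 1)) (b := |t| + 1)).exists_bound_of_continuousOn
    hL.continuousOn
  have hM' : ∀ s, |s| ≤ |t| + 1 → ‖L s‖ ≤ M := fun s hs => hM s (abs_le.1 hs)
  have hM0 : 0 ≤ M := (norm_nonneg _).trans (hM' 0 (by simp; positivity))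
  have hb := odeIter_bound L x₀ (|t| + 1) M hM0 hM'
  have hs0 : Summable fun n : ℕ => ‖x₀‖ * ((M * (|t| + 1)) ^ n / n.factorial) :=
    (Real.summable_pow_div_factorial _).mul_left _
  have hb2 : ∀ n s, |s| ≤ |t| + 1 →
      ‖odeIter L x₀ n s‖ ≤ ‖x₀‖ * ((M * (|t| + 1)) ^ n / n.factorial) := by
    intro n s hs
    refine (hb n s hs).trans ?_
    rw [mul_pow, mul_assoc, div_mul_eq_mul_div]
    gcongr
  have hsum : Summable fun n => odeIter L x₀ n t :=
    .of_norm_bounded hs0 fun n => hb2 n t (by linarith)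
  have key := hasDerivAt_tsum_of_isPreconnected (𝕜 := ℝ) (t := Set.Ioo (-(|t| + 1)) (|t| + 1))
    (g := fun n => odeIter L x₀ (n + 1)) (g' := fun n s => L s (odeIter L x₀ n s))
    (y₀ := 0) (y := t) (hs0.mul_left M) isOpen_Ioo isPreconnected_Ioo
    (fun n y _ => odeIter_hasDerivAt L hL x₀ n y)
    (fun n y hy => by
      have hy' : |y| ≤ |t| + 1 := (abs_lt.2 hy).le
      exact (ContinuousLinearMap.le_opNorm _ _).trans
        (mul_le_mul (hM' y hy') (hb2 n y hy') (norm_nonneg _) hM0))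
    (abs_lt.1 (by simp; positivity)) (by simp [odeIter, summable_zero]) (abs_lt.1 (by linarith))
  have e : L t (x₀ + ∑' n, odeIter L x₀ (n + 1) t) = ∑' n, L t (odeIter L x₀ n t) := by
    rw [← (L t).map_tsum hsum, hsum.tsum_eq_zero_add]
    rfl
  rw [e]
  exact key.const_add x₀

theorem linear_ode_smooth {F : Type*} [NormedAddCommGroup F] [NormedSpace ℝ F]
    (L : ℝ → F →L[ℝ] F) (hL : ContDiff ℝ ∞ L) (x : ℝ → F)
    (hx : ∀ t, HasDerivAt x (L t (x t)) t) : ContDiff ℝ ∞ x := by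
  rw [contDiff_infty]
  intro n
  induction n with
  | zero =>
    have : Continuous x := continuous_iff_continuousAt.2 fun t => (hx t).continuousAt
    simpa using this
  | succ n ih =>
    push_cast
    rw [contDiff_succ_iff_deriv]
    refine ⟨fun t => (hx t).differentiableAt, by simp, ?_⟩
    have : deriv x = fun t => L t (x t) := funext fun t => (hx t).deriv
    rw [this]
    exact (hL.of_le (by exact_mod_cast le_top)).clm_apply ih

/-- `crossMat` as a continuous bilinear map. -/
noncomputable def crossCLM : (Fin 3 → ℝ) →L[ℝ] (Fin 3 → ℝ) →L[ℝ] (Fin 3 → ℝ) :=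
  LinearMap.toContinuousLinearMap
    { toFun := fun v => LinearMap.toContinuousLinearMap (Matrix.toLin' (crossMat v))
      map_add' := by
        intro v w
        ext x i
        fin_cases i <;> simp [crossMat, Matrix.mulVec, dotProduct, Fin.sum_univ_three] <;> ring
      map_smul' := by
        intro c w
        ext x i
        fin_cases i <;> simp [crossMat, Matrix.mulVec, dotProduct, Fin.sum_univ_three] <;> ring }

theorem crossCLM_apply (v w : Fin 3 → ℝ) : crossCLM v w = crossMat v *ᵥ w := rfl

theorem exists_gauge {E : Type*} [NormedAddCommGroup E] [NormedSpace ℝ E] [FiniteDimensional ℝ E]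
    (G : ℝ → E →L[ℝ] E) (hG : ContDiff ℝ ∞ G) :
    ∃ A B : ℝ → E →L[ℝ] E, ContDiff ℝ ∞ A ∧ ContDiff ℝ ∞ B ∧
      (∀ t, HasDerivAt A (A t * G t) t) ∧ (∀ t, HasDerivAt B (-(G t * B t)) t) ∧
      ∀ t, B t * A t = 1 := by
  have : CompleteSpace E := FiniteDimensional.complete ℝ E
  have hL1 : ContDiff ℝ ∞ fun t => (ContinuousLinearMap.mul ℝ (E →L[ℝ] E)).flip (G t) :=
    (ContinuousLinearMap.contDiff _).comp hG
  have hL2 : ContDiff ℝ ∞ fun t => -(ContinuousLinearMap.mul ℝ (E →L[ℝ] E)) (G t) :=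
    ((ContinuousLinearMap.contDiff _).comp hG).neg
  obtain ⟨A, hA0, hA⟩ := linear_ode _ hL1.continuous (1 : E →L[ℝ] E)
  obtain ⟨B, hB0, hB⟩ := linear_ode _ hL2.continuous (1 : E →L[ℝ] E)
  have hA' : ∀ t, HasDerivAt A (A t * G t) t := hA
  have hB' : ∀ t, HasDerivAt B (-(G t * B t)) t := hB
  refine ⟨A, B, linear_ode_smooth _ hL1 A hA, linear_ode_smooth _ hL2 B hB, hA', hB', fun t => ?_⟩
  have hd : ∀ s, HasDerivAt (fun s => A s * B s) 0 s := by
    intro s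
    have h := (hA' s).mul (hB' s)
    have e : A s * G s * B s + A s * -(G s * B s) = 0 := by
      rw [mul_neg, mul_assoc, add_neg_cancel]
    rw [e] at h
    exact h
  have h1 : A t * B t = 1 := by
    have := is_const_of_deriv_eq_zero (fun s => (hd s).differentiableAt) (fun s => (hd s).deriv) t 0
    simpa [hA0, hB0] using this
  have h2 : (A t : E →ₗ[ℝ] E) * (B t : E →ₗ[ℝ] E) = 1 := by
    ext x; simpa using congrArg (fun f => f x) h1
  have h3 := mul_eq_one_comm.1 h2
  ext x
  simpa using congrArg (fun f => f x) h3

/-- integration step from Section 4.3 of the paper: on a convex open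
set, `∂₂h₁ - ∂₁h₂ = [g(u¹)]h₂` implies `h₁ = ∂₁k + [g(u¹)]k`, `h₂ = ∂₂k` for some
smooth `k`. -/
theorem integrate_h_equations
    (V : Set (Fin 2 → ℝ)) (hV : IsOpen V) (hconv : Convex ℝ V)
    (g : ℝ → Fin 3 → ℝ) (hg : ContDiff ℝ (⊤ : ℕ∞) g)
    (h₁ h₂ : (Fin 2 → ℝ) → (Fin 3 → ℝ))
    (hh₁ : ContDiffOn ℝ (⊤ : ℕ∞) h₁ V) (hh₂ : ContDiffOn ℝ (⊤ : ℕ∞) h₂ V)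
    (heq : ∀ u ∈ V, pd 1 h₁ u - pd 0 h₂ u = crossMat (g (u 0)) *ᵥ h₂ u) :
    ∃ k : (Fin 2 → ℝ) → (Fin 3 → ℝ), ContDiffOn ℝ (⊤ : ℕ∞) k V ∧
      ∀ u ∈ V,
        h₁ u = pd 0 k u + crossMat (g (u 0)) *ᵥ k u ∧
        h₂ u = pd 1 k u := by
  classical
  obtain ⟨A, B, hAs, hBs, hA, hB, hBA⟩ := exists_gauge (fun t => crossCLM (g t))
    ((ContinuousLinearMap.contDiff crossCLM).comp hg)
  have hpr : ∀ u : Fin 2 → ℝ, HasFDerivAt (fun u : Fin 2 → ℝ => u 0)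
      (ContinuousLinearMap.proj (R := ℝ) (φ := fun _ : Fin 2 => ℝ) 0) u := fun u =>
    (ContinuousLinearMap.proj (R := ℝ) (φ := fun _ : Fin 2 => ℝ) 0).hasFDerivAt
  have hc0 : ContDiff ℝ ∞ (fun u : Fin 2 → ℝ => u 0) := by fun_prop
  have hAu : ∀ u : Fin 2 → ℝ, HasFDerivAt (fun u : Fin 2 → ℝ => A (u 0)) _ u := fun u =>
    (hA (u 0)).hasFDerivAt.comp u (hpr u)
  have hBu : ∀ u : Fin 2 → ℝ, HasFDerivAt (fun u : Fin 2 → ℝ => B (u 0)) _ u := fun u =>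
    (hB (u 0)).hasFDerivAt.comp u (hpr u)
  have hdiff : ∀ h : (Fin 2 → ℝ) → (Fin 3 → ℝ), ContDiffOn ℝ ∞ h V → ∀ u ∈ V,
      HasFDerivAt h (fderiv ℝ h u) u := fun h hh u hu =>
    ((hh.differentiableOn (by simp)).differentiableAt (hV.mem_nhds hu)).hasFDerivAt
  have hpd : ∀ h : (Fin 2 → ℝ) → (Fin 3 → ℝ), ContDiffOn ℝ ∞ h V → ∀ u ∈ V, ∀ x,
      fderiv ℝ (fun u => A (u 0) (h u)) u x
        = A (u 0) (fderiv ℝ h u x) + x 0 • A (u 0) (crossMat (g (u 0)) *ᵥ h u) := by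
    intro h hh u hu x
    rw [((hAu u).clm_apply (hdiff h hh u hu)).fderiv]
    simp [crossCLM_apply]
  have hps : ∀ h : (Fin 2 → ℝ) → (Fin 3 → ℝ), ContDiffOn ℝ ∞ h V →
      ContDiffOn ℝ ∞ (fun u => A (u 0) (h u)) V := fun h hh =>
    (hAs.comp hc0).contDiffOn.clm_apply hh
  set p₁ := fun u => A (u 0) (h₁ u) with hp₁
  set p₂ := fun u => A (u 0) (h₂ u) with hp₂
  let S : Fin 2 → (Fin 3 → ℝ) →L[ℝ] (Fin 2 → ℝ) →L[ℝ] (Fin 3 → ℝ) := fun i =>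
    ContinuousLinearMap.smulRightL ℝ (Fin 2 → ℝ) (Fin 3 → ℝ)
      (ContinuousLinearMap.proj (R := ℝ) (φ := fun _ : Fin 2 => ℝ) i)
  have hS : ∀ i w x, S i w x = x i • w := fun i w x => rfl
  let η : (Fin 2 → ℝ) → (Fin 2 → ℝ) →L[ℝ] (Fin 3 → ℝ) := fun u => S 0 (p₁ u) + S 1 (p₂ u)
  have hηs : ContDiffOn ℝ ∞ η V :=
    ((S 0).contDiff.comp_contDiffOn (hps h₁ hh₁)).add ((S 1).contDiff.comp_contDiffOn (hps h₂ hh₂))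
  have hdec : ∀ x : Fin 2 → ℝ, x = x 0 • Pi.single 0 1 + x 1 • Pi.single 1 1 := by
    intro x; ext i; fin_cases i <;> simp
  have hηd : ∀ u ∈ V, ∀ x y, fderiv ℝ η u x y = y 0 • fderiv ℝ p₁ u x + y 1 • fderiv ℝ p₂ u x := by
    intro u hu x y
    have := (((S 0).hasFDerivAt.comp u (hdiff _ (hps h₁ hh₁) u hu)).add
      ((S 1).hasFDerivAt.comp u (hdiff _ (hps h₂ hh₂) u hu)))
    have h' : HasFDerivAt η _ u := this
    rw [h'.fderiv]
    simp [hS, hp₁, hp₂]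
  have hclosed : ∀ u ∈ V, fderiv ℝ p₁ u (Pi.single 1 1) = fderiv ℝ p₂ u (Pi.single 0 1) := by
    intro u hu
    rw [hpd h₁ hh₁ u hu, hpd h₂ hh₂ u hu]
    have := heq u hu
    rw [sub_eq_iff_eq_add] at this
    simp only [pd] at this
    rw [this]
    simp [add_comm]
  obtain ⟨φ, hφ⟩ := hconv.exists_forall_hasFDerivAt_of_fderiv_symmetric hV
    (hηs.differentiableOn (by simp)) (fun u hu x y => by
      rw [hηd u hu, hηd u hu]
      have e : ∀ (p : (Fin 2 → ℝ) → (Fin 3 → ℝ)) (z : Fin 2 → ℝ), fderiv ℝ p u z =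
          z 0 • fderiv ℝ p u (Pi.single 0 1) + z 1 • fderiv ℝ p u (Pi.single 1 1) := by
        intro p z
        conv_lhs => rw [hdec z]
        rw [map_add, map_smul, map_smul]
      rw [e p₁ x, e p₁ y, e p₂ x, e p₂ y, hclosed u hu]
      module)
  have hφs : ContDiffOn ℝ ∞ φ V := by
    rw [contDiffOn_infty_iff_fderiv_of_isOpen hV]
    exact ⟨fun u hu => (hφ u hu).differentiableAt.differentiableWithinAt,
      hηs.congr fun u hu => (hφ u hu).fderiv⟩
  have hBA' : ∀ t w, B t (A t w) = w := fun t w => by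
    simpa using congrArg (fun f => f w) (hBA t)
  refine ⟨fun u => B (u 0) (φ u), (hBs.comp hc0).contDiffOn.clm_apply hφs, fun u hu => ?_⟩
  have hk := ((hBu u).clm_apply (hφ u hu)).fderiv
  simp only [pd]
  rw [hk]
  constructor
  · simp [η, hS, hp₁, hBA', crossCLM_apply]
  · simp [η, hS, hp₂, hBA', crossCLM_apply]
end
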